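/- arXiv:2006.16565 — 2 statements merged into one kernel-verified Lean document; each statement's English description precedes it below -/
import Mathlib

section
/- Let F̄ = {z ∈ ℍ² : |Re z| ≤ 1/2 and |z| ≥ 1} be the closure of the standard fundamental domain of the modular group SL(2,ℤ). Then for all z₁, z₂ ∈ F̄, the infimum inf_{γ ∈ SL(2,ℤ)} d(z₁, γ·z₂) is attained at one of the following ten elements (viewed up to sign, i.e. as elements of PSL(2,ℤ)): the identity, (1 1; 0 1), (1 −1; 0 1), (1 0; 1 1), (1 0; −1 1), (0 −1; 1 1), (0 −1; 1 −1), (1 −1; 1 0), (−1 −1; 1 0), and (0 −1; 1 0). Consequently, the geodesic-covering number of PSL(2,ℤ) is at most 10. -/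
open scoped UpperHalfPlane MatrixGroups

noncomputable section

/-- The closure of the standard fundamental domain of the modular group:
`{z ∈ ℍ² : |Re z| ≤ 1/2 and |z| ≥ 1}`. -/
def modularFundClosure : Set ℍ :=
  {z | |z.re| ≤ 1 / 2 ∧ 1 ≤ ‖(z : ℂ)‖}

def M1 : SL(2, ℤ) := 1
def M2 : SL(2, ℤ) := ⟨!![1, 1; 0, 1], by norm_num [Matrix.det_fin_two_of]⟩
def M3 : SL(2, ℤ) := ⟨!![1, -1; 0, 1], by norm_num [Matrix.det_fin_two_of]⟩
def M4 : SL(2, ℤ) := ⟨!![1, 0; 1, 1], by norm_num [Matrix.det_fin_two_of]⟩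
def M5 : SL(2, ℤ) := ⟨!![1, 0; -1, 1], by norm_num [Matrix.det_fin_two_of]⟩
def M6 : SL(2, ℤ) := ⟨!![0, -1; 1, 1], by norm_num [Matrix.det_fin_two_of]⟩
def M7 : SL(2, ℤ) := ⟨!![0, -1; 1, -1], by norm_num [Matrix.det_fin_two_of]⟩
def M8 : SL(2, ℤ) := ⟨!![1, -1; 1, 0], by norm_num [Matrix.det_fin_two_of]⟩
def M9 : SL(2, ℤ) := ⟨!![-1, -1; 1, 0], by norm_num [Matrix.det_fin_two_of]⟩
def M10 : SL(2, ℤ) := ⟨!![0, -1; 1, 0], by norm_num [Matrix.det_fin_two_of]⟩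

/-- Squared modulus of `c z₁ z₂ + d z₁ - a z₂ - b`. -/
def GG (x₁ y₁ x₂ y₂ a b c d : ℝ) : ℝ :=
  (c * (x₁ * x₂ - y₁ * y₂) + d * x₁ - a * x₂ - b) ^ 2 +
    (c * (x₁ * y₂ + x₂ * y₁) + d * y₁ - a * y₂) ^ 2

lemma cosh_dist_smul (z₁ z₂ : ℍ) (γ : SL(2, ℤ)) :
    Real.cosh (dist z₁ (γ • z₂)) = 1 + GG z₁.re z₁.im z₂.re z₂.im (γ 0 0) (γ 0 1) (γ 1 0) (γ 1 1)
      / (2 * z₁.im * z₂.im) := by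
  rw [UpperHalfPlane.cosh_dist]
  have hd : (((γ 1 0 : ℤ) : ℂ) * (z₂ : ℂ) + ((γ 1 1 : ℤ) : ℂ)) ≠ 0 := by
    have := UpperHalfPlane.denom_ne_zero (γ : GL (Fin 2) ℝ) z₂
    simpa [UpperHalfPlane.denom] using this
  have him : (γ • z₂).im = z₂.im /
      Complex.normSq (((γ 1 0 : ℤ) : ℂ) * (z₂ : ℂ) + ((γ 1 1 : ℤ) : ℂ)) := by
    have := ModularGroup.im_smul_eq_div_normSq γ z₂
    simpa [UpperHalfPlane.denom] using this
  have hco : ((γ • z₂ : ℍ) : ℂ) = (((γ 0 0 : ℤ) : ℂ) * (z₂ : ℂ) + ((γ 0 1 : ℤ) : ℂ)) /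
      (((γ 1 0 : ℤ) : ℂ) * (z₂ : ℂ) + ((γ 1 1 : ℤ) : ℂ)) := by
    have := congrArg (fun w : ℍ => (w : ℂ)) (UpperHalfPlane.specialLinearGroup_apply γ z₂)
    simpa using this
  have hn : Complex.normSq (((γ 1 0 : ℤ) : ℂ) * (z₂ : ℂ) + ((γ 1 1 : ℤ) : ℂ)) ≠ 0 := by
    simpa [Complex.normSq_eq_zero] using hd
  have h1 := z₁.im_pos.ne'
  have h2 := z₂.im_pos.ne'
  have key : dist (z₁ : ℂ) ((γ • z₂ : ℍ) : ℂ) ^ 2 *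
      Complex.normSq (((γ 1 0 : ℤ) : ℂ) * (z₂ : ℂ) + ((γ 1 1 : ℤ) : ℂ)) =
      GG z₁.re z₁.im z₂.re z₂.im (γ 0 0) (γ 0 1) (γ 1 0) (γ 1 1) := by
    rw [Complex.dist_eq, ← Complex.normSq_eq_norm_sq, ← Complex.normSq_mul, hco, sub_mul,
      div_mul_cancel₀ _ hd, Complex.normSq_apply]
    simp [GG]
    ring
  rw [him, ← key]
  field_simp

lemma dist_le_of_GG (z₁ z₂ : ℍ) (γ γ' : SL(2, ℤ))
    (h : GG z₁.re z₁.im z₂.re z₂.im (γ 0 0) (γ 0 1) (γ 1 0) (γ 1 1) ≤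
      GG z₁.re z₁.im z₂.re z₂.im (γ' 0 0) (γ' 0 1) (γ' 1 0) (γ' 1 1)) :
    dist z₁ (γ • z₂) ≤ dist z₁ (γ' • z₂) := by
  have h1 := z₁.im_pos
  have h2 := z₂.im_pos
  have : Real.cosh (dist z₁ (γ • z₂)) ≤ Real.cosh (dist z₁ (γ' • z₂)) := by
    rw [cosh_dist_smul, cosh_dist_smul]
    gcongr
  rw [Real.cosh_le_cosh] at this
  simpa [abs_of_nonneg dist_nonneg] using this

/-- The value for `c = 1`. -/
def HH (y₁ y₂ P Q : ℝ) : ℝ := (P * Q + 1 - y₁ * y₂) ^ 2 + (P * y₂ + Q * y₁) ^ 2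

lemma HH_swap (y₁ y₂ P Q : ℝ) : HH y₁ y₂ P Q = HH y₂ y₁ Q P := by
  unfold HH; ring

lemma shift_norm (x y : ℝ) (hx : |x| ≤ 1 / 2) (h : 1 ≤ x ^ 2 + y ^ 2) (d : ℤ) :
    1 ≤ (x + d) ^ 2 + y ^ 2 := by
  obtain ⟨ha, hb⟩ := abs_le.mp hx
  rcases lt_trichotomy d 0 with hd | hd | hd
  · have : (d : ℝ) ≤ -1 := by exact_mod_cast (by omega : d ≤ -1)
    nlinarith
  · subst hd; simpa using h
  · have : (1 : ℝ) ≤ d := by exact_mod_cast hd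
    nlinarith

lemma clamp (x₁ y₁ y₂ Q : ℝ) (hx : |x₁| ≤ 1 / 2) (hQ : 1 ≤ Q ^ 2 + y₂ ^ 2) (a : ℤ) :
    ∃ a' : ℤ, (a' = -1 ∨ a' = 0 ∨ a' = 1) ∧ HH y₁ y₂ (x₁ + a') Q ≤ HH y₁ y₂ (x₁ + a) Q := by
  obtain ⟨ha, hb⟩ := abs_le.mp hx
  have hq1 : Q ≤ Q ^ 2 + y₂ ^ 2 := by nlinarith [sq_nonneg (Q - 1), sq_nonneg y₂]
  have hq2 : -Q ≤ Q ^ 2 + y₂ ^ 2 := by nlinarith [sq_nonneg (Q + 1), sq_nonneg y₂]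
  have key : ∀ P P₁ : ℝ, HH y₁ y₂ P Q - HH y₁ y₂ P₁ Q =
      (P - P₁) * ((Q ^ 2 + y₂ ^ 2) * (P + P₁) + 2 * Q) := by
    intro P P₁; unfold HH; ring
  by_cases h1 : 2 ≤ a
  · refine ⟨1, by simp, ?_⟩
    have h2 : (2 : ℝ) ≤ a := by exact_mod_cast h1
    have := key (x₁ + a) (x₁ + (1 : ℤ))
    push_cast at this ⊢
    have h3 : 0 ≤ (Q ^ 2 + y₂ ^ 2) * (x₁ + a + (x₁ + 1)) + 2 * Q := by nlinarith
    have h4 : 0 ≤ (x₁ + a - (x₁ + 1)) := by linarith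
    have := mul_nonneg h4 h3
    linarith
  by_cases h1' : a ≤ -2
  · refine ⟨-1, by simp, ?_⟩
    have h2 : (a : ℝ) ≤ -2 := by exact_mod_cast h1'
    have := key (x₁ + a) (x₁ + (-1 : ℤ))
    push_cast at this ⊢
    have h3 : (Q ^ 2 + y₂ ^ 2) * (x₁ + a + (x₁ + -1)) + 2 * Q ≤ 0 := by nlinarith
    have h4 : (x₁ + a - (x₁ + -1)) ≤ 0 := by linarith
    have := mul_nonneg_of_nonpos_of_nonpos h4 h3
    linarith
  exact ⟨a, by omega, le_rfl⟩

lemma GG_neg (x₁ y₁ x₂ y₂ a b c d : ℝ) :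
    GG x₁ y₁ x₂ y₂ (-a) (-b) (-c) (-d) = GG x₁ y₁ x₂ y₂ a b c d := by
  unfold GG; ring

/-- The list of ten matrices, as a predicate on entries up to sign. -/
def Good (a b c d : ℤ) : Prop :=
  (c = 0 ∧ a = 1 ∧ d = 1 ∧ (b = -1 ∨ b = 0 ∨ b = 1)) ∨
  (c = 1 ∧ b = a * d - 1 ∧ (a = -1 ∨ a = 0 ∨ a = 1) ∧ (d = -1 ∨ d = 0 ∨ d = 1) ∧ a * d ≠ -1)

lemma trans_case (x₁ y₁ x₂ y₂ : ℝ) (hx₁ : |x₁| ≤ 1 / 2) (hx₂ : |x₂| ≤ 1 / 2) (b : ℤ) :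
    ∃ n : ℤ, (n = -1 ∨ n = 0 ∨ n = 1) ∧ |x₁ - x₂ - n| ≤ 1 / 2 ∧
      GG x₁ y₁ x₂ y₂ 1 n 0 1 ≤ GG x₁ y₁ x₂ y₂ 1 b 0 1 := by
  obtain ⟨h1, h2⟩ := abs_le.mp hx₁
  obtain ⟨h3, h4⟩ := abs_le.mp hx₂
  have hn : ∃ n : ℤ, (n = -1 ∨ n = 0 ∨ n = 1) ∧ |x₁ - x₂ - n| ≤ 1 / 2 := by
    by_cases h5 : x₁ - x₂ ≤ -(1 / 2)
    · exact ⟨-1, by simp, by push_cast; rw [abs_le]; constructor <;> linarith⟩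
    by_cases h6 : 1 / 2 ≤ x₁ - x₂
    · exact ⟨1, by simp, by push_cast; rw [abs_le]; constructor <;> linarith⟩
    · exact ⟨0, by simp, by push_cast; rw [abs_le]; constructor <;> linarith⟩
  obtain ⟨n, hn, hn'⟩ := hn
  refine ⟨n, hn, hn', ?_⟩
  obtain ⟨h5, h6⟩ := abs_le.mp hn'
  have : (x₁ - x₂ - n) ^ 2 ≤ (x₁ - x₂ - b) ^ 2 := by
    rcases lt_trichotomy n b with h | h | h
    · have : (n : ℝ) + 1 ≤ b := by exact_mod_cast h
      nlinarith
    · rw [h]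
    · have : (b : ℝ) + 1 ≤ n := by exact_mod_cast h
      nlinarith
  unfold GG
  nlinarith

lemma core_pos (x₁ y₁ x₂ y₂ : ℝ) (hx₁ : |x₁| ≤ 1 / 2) (hx₂ : |x₂| ≤ 1 / 2)
    (hy₁ : 0 < y₁) (hy₂ : 0 < y₂) (hn₁ : 1 ≤ x₁ ^ 2 + y₁ ^ 2) (hn₂ : 1 ≤ x₂ ^ 2 + y₂ ^ 2)
    (a b c d : ℤ) (hdet : a * d - b * c = 1) (hc : 0 ≤ c) :
    ∃ a' b' c' d' : ℤ, Good a' b' c' d' ∧ GG x₁ y₁ x₂ y₂ a' b' c' d' ≤ GG x₁ y₁ x₂ y₂ a b c d := by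
  obtain ⟨h1, h2⟩ := abs_le.mp hx₁
  obtain ⟨h3, h4⟩ := abs_le.mp hx₂
  rcases (by omega : c = 0 ∨ c = 1 ∨ 2 ≤ c) with rfl | rfl | hc2
  · have had : a * d = 1 := by linarith
    rcases Int.eq_one_or_neg_one_of_mul_eq_one' had with ⟨rfl, rfl⟩ | ⟨rfl, rfl⟩
    · obtain ⟨n, hn, -, h⟩ := trans_case x₁ y₁ x₂ y₂ hx₁ hx₂ b
      exact ⟨1, n, 0, 1, Or.inl ⟨rfl, rfl, rfl, hn⟩, by simpa using h⟩
    · obtain ⟨n, hn, -, h⟩ := trans_case x₁ y₁ x₂ y₂ hx₁ hx₂ (-b)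
      refine ⟨1, n, 0, 1, Or.inl ⟨rfl, rfl, rfl, hn⟩, ?_⟩
      rw [← GG_neg x₁ y₁ x₂ y₂ ((-1 : ℤ) : ℝ)]
      simpa using h
  · have hG : ∀ a d : ℤ, GG x₁ y₁ x₂ y₂ a ((a * d - 1 : ℤ) : ℝ) 1 d =
        HH y₁ y₂ (x₁ + (-a : ℤ)) (x₂ + d) := by
      intro a d; unfold GG HH; push_cast; ring
    have hb : b = a * d - 1 := by linarith
    subst hb
    obtain ⟨a', ha', hle⟩ := clamp x₁ y₁ y₂ (x₂ + d) hx₁ (shift_norm x₂ y₂ hx₂ hn₂ d) (-a)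
    obtain ⟨d', hd', hle'⟩ := clamp x₂ y₂ y₁ (x₁ + a') hx₂ (shift_norm x₁ y₁ hx₁ hn₁ a') d
    rw [HH_swap y₂, HH_swap y₂] at hle'
    have hfin : HH y₁ y₂ (x₁ + a') (x₂ + d') ≤ GG x₁ y₁ x₂ y₂ a ((a * d - 1 : ℤ) : ℝ) (1 : ℤ) d := by
      rw [Int.cast_one, hG]; exact hle'.trans hle
    by_cases hbad : a' * d' = 1
    · refine ⟨0, 0 * 0 - 1, 1, 0, Or.inr (by simp), le_trans ?_ hfin⟩
      rw [Int.cast_one, hG]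
      have hy : 0 < y₁ ^ 2 := by positivity
      have hy' : 0 < y₂ ^ 2 := by positivity
      have hHH : ∀ P Q, HH y₁ y₂ P Q = (P * Q) ^ 2 + 2 * (P * Q) + y₂ ^ 2 * P ^ 2 +
        y₁ ^ 2 * Q ^ 2 + (1 - y₁ * y₂) ^ 2 := by intro P Q; unfold HH; ring
      have aux : ∀ P Q : ℝ, x₁ ^ 2 ≤ P ^ 2 → x₂ ^ 2 ≤ Q ^ 2 → x₁ * x₂ ≤ P * Q →
          HH y₁ y₂ (x₁ + ((-0 : ℤ) : ℝ)) (x₂ + ((0 : ℤ) : ℝ)) ≤ HH y₁ y₂ P Q := by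
        intro P Q hP hQ hPQ
        rw [hHH, hHH]
        have e1 : (x₁ * x₂) ^ 2 ≤ (P * Q) ^ 2 := by
          rw [mul_pow, mul_pow]; gcongr
        have e2 : y₂ ^ 2 * x₁ ^ 2 ≤ y₂ ^ 2 * P ^ 2 := by gcongr
        have e3 : y₁ ^ 2 * x₂ ^ 2 ≤ y₁ ^ 2 * Q ^ 2 := by gcongr
        simp only [neg_zero, Int.cast_zero, add_zero]
        linarith
      rcases Int.eq_one_or_neg_one_of_mul_eq_one' hbad with ⟨rfl, rfl⟩ | ⟨rfl, rfl⟩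
      · apply aux <;> push_cast <;> nlinarith
      · apply aux <;> push_cast <;> nlinarith
    · refine ⟨-a', (-a') * d' - 1, 1, d', Or.inr ⟨rfl, rfl, by omega, hd', ?_⟩, ?_⟩
      · intro h; apply hbad; linarith
      · rw [Int.cast_one] at hfin ⊢; rw [hG, neg_neg]; exact hfin
  · obtain ⟨n, hn, hn', -⟩ := trans_case x₁ y₁ x₂ y₂ hx₁ hx₂ 0
    refine ⟨1, n, 0, 1, Or.inl ⟨rfl, rfl, rfl, hn⟩, ?_⟩
    have hc' : (2 : ℝ) ≤ c := by exact_mod_cast hc2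
    have hdet' : (a : ℝ) * d - b * c = 1 := by exact_mod_cast hdet
    have hcpos : (0 : ℝ) < c := by linarith
    have hid : GG x₁ y₁ x₂ y₂ a b c d = ((c * x₁ - a) * (c * x₂ + d) + 1) ^ 2 / c ^ 2
        + (c * x₁ - a) ^ 2 * y₂ ^ 2 + (c * x₂ + d) ^ 2 * y₁ ^ 2 + c ^ 2 * (y₁ ^ 2 * y₂ ^ 2)
        - 2 * (y₁ * y₂) := by
      have hb : (b : ℝ) = (a * d - 1) / c := by field_simp; linarith
      rw [hb]; unfold GG; field_simp; ring
    have hlow : 4 * (y₁ ^ 2 * y₂ ^ 2) - 2 * (y₁ * y₂) ≤ GG x₁ y₁ x₂ y₂ a b c d := by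
      rw [hid]
      have e1 : 0 ≤ ((c * x₁ - a) * (c * x₂ + d) + 1) ^ 2 / (c : ℝ) ^ 2 := by positivity
      have e2 : 0 ≤ (c * x₁ - a) ^ 2 * y₂ ^ 2 := by positivity
      have e3 : 0 ≤ (c * x₂ + d) ^ 2 * y₁ ^ 2 := by positivity
      have e4 : 4 * (y₁ ^ 2 * y₂ ^ 2) ≤ (c : ℝ) ^ 2 * (y₁ ^ 2 * y₂ ^ 2) := by
        have : (4 : ℝ) ≤ c ^ 2 := by nlinarith
        gcongr
      linarith
    refine le_trans ?_ hlow
    have f1 : 3 / 4 ≤ y₁ ^ 2 := by nlinarith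
    have f2 : 3 / 4 ≤ y₂ ^ 2 := by nlinarith
    have f3 : (x₁ - x₂ - n) ^ 2 ≤ 1 / 4 := by
      obtain ⟨h5, h6⟩ := abs_le.mp hn'
      nlinarith
    have f4 := mul_nonneg (sub_nonneg.2 f1) (sub_nonneg.2 f2)
    have : GG x₁ y₁ x₂ y₂ (1 : ℤ) n (0 : ℤ) (1 : ℤ) =
        (x₁ - x₂ - n) ^ 2 + y₁ ^ 2 + y₂ ^ 2 - 2 * (y₁ * y₂) := by
      unfold GG; push_cast; ring
    rw [this]
    linarith

lemma core (x₁ y₁ x₂ y₂ : ℝ) (hx₁ : |x₁| ≤ 1 / 2) (hx₂ : |x₂| ≤ 1 / 2)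
    (hy₁ : 0 < y₁) (hy₂ : 0 < y₂) (hn₁ : 1 ≤ x₁ ^ 2 + y₁ ^ 2) (hn₂ : 1 ≤ x₂ ^ 2 + y₂ ^ 2)
    (a b c d : ℤ) (hdet : a * d - b * c = 1) :
    ∃ a' b' c' d' : ℤ, Good a' b' c' d' ∧ GG x₁ y₁ x₂ y₂ a' b' c' d' ≤ GG x₁ y₁ x₂ y₂ a b c d := by
  rcases le_total 0 c with hc | hc
  · exact core_pos x₁ y₁ x₂ y₂ hx₁ hx₂ hy₁ hy₂ hn₁ hn₂ a b c d hdet hc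
  · obtain ⟨a', b', c', d', hg, hle⟩ := core_pos x₁ y₁ x₂ y₂ hx₁ hx₂ hy₁ hy₂ hn₁ hn₂
      (-a) (-b) (-c) (-d) (by linarith) (by linarith)
    refine ⟨a', b', c', d', hg, ?_⟩
    push_cast at hle
    rwa [GG_neg] at hle

/-- Membership in the list of ten matrices. -/
def InTen (γ : SL(2, ℤ)) : Prop :=
  γ = M1 ∨ γ = M2 ∨ γ = M3 ∨ γ = M4 ∨ γ = M5 ∨ γ = M6 ∨ γ = M7 ∨ γ = M8 ∨ γ = M9 ∨ γ = M10

lemma good_realize (x₁ y₁ x₂ y₂ : ℝ) (a b c d : ℤ) (h : Good a b c d) :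
    ∃ γ : SL(2, ℤ), InTen γ ∧
      GG x₁ y₁ x₂ y₂ (γ 0 0) (γ 0 1) (γ 1 0) (γ 1 1) = GG x₁ y₁ x₂ y₂ a b c d := by
  rcases h with ⟨rfl, rfl, rfl, rfl | rfl | rfl⟩ |
    ⟨rfl, rfl, rfl | rfl | rfl, rfl | rfl | rfl, hne⟩
  · exact ⟨M3, by simp [InTen], by simp [M3]⟩
  · exact ⟨M1, by simp [InTen], by simp [M1]⟩
  · exact ⟨M2, by simp [InTen], by simp [M2]⟩
  · refine ⟨M5, by simp [InTen], ?_⟩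
    rw [← GG_neg]; simp [M5]
  · exact ⟨M9, by simp [InTen], by simp [M9]⟩
  · exact absurd rfl hne
  · exact ⟨M7, by simp [InTen], by simp [M7]⟩
  · exact ⟨M10, by simp [InTen], by simp [M10]⟩
  · exact ⟨M6, by simp [InTen], by simp [M6]⟩
  · exact absurd rfl hne
  · exact ⟨M8, by simp [InTen], by simp [M8]⟩
  · exact ⟨M4, by simp [InTen], by simp [M4]⟩

lemma norm_cond (z : ℍ) (h : 1 ≤ ‖(z : ℂ)‖) : 1 ≤ z.re ^ 2 + z.im ^ 2 := by
  have h2 : 1 ≤ ‖(z : ℂ)‖ ^ 2 := by nlinarith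
  rw [← Complex.normSq_eq_norm_sq, Complex.normSq_apply] at h2
  simp only [UpperHalfPlane.coe_re, UpperHalfPlane.coe_im] at h2
  nlinarith

/-- For all `z₁, z₂` in the closure of the standard fundamental domain of `SL(2,ℤ)`,
the infimum `inf_{γ ∈ SL(2,ℤ)} d(z₁, γ·z₂)` is attained at one of ten explicit
elements; consequently the geodesic-covering number of `PSL(2,ℤ)` is at most `10`. -/
theorem modular_geodesic_cover_ten (z₁ z₂ : ℍ)
    (h₁ : z₁ ∈ modularFundClosure) (h₂ : z₂ ∈ modularFundClosure) :
    ∃ γ : SL(2, ℤ),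
      (γ = M1 ∨ γ = M2 ∨ γ = M3 ∨ γ = M4 ∨ γ = M5 ∨
        γ = M6 ∨ γ = M7 ∨ γ = M8 ∨ γ = M9 ∨ γ = M10) ∧
      (⨅ γ' : SL(2, ℤ), dist z₁ (γ' • z₂)) = dist z₁ (γ • z₂) := by
  have hdom : ∀ γ' : SL(2, ℤ), ∃ γ, InTen γ ∧ dist z₁ (γ • z₂) ≤ dist z₁ (γ' • z₂) := by
    intro γ'
    have hdet : γ' 0 0 * γ' 1 1 - γ' 0 1 * γ' 1 0 = 1 := by
      rw [← Matrix.det_fin_two]; exact γ'.2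
    obtain ⟨a, b, c, d, hg, hle⟩ := core z₁.re z₁.im z₂.re z₂.im h₁.1 h₂.1 z₁.im_pos z₂.im_pos
      (norm_cond z₁ h₁.2) (norm_cond z₂ h₂.2) _ _ _ _ hdet
    obtain ⟨γ, hγ, he⟩ := good_realize z₁.re z₁.im z₂.re z₂.im a b c d hg
    exact ⟨γ, hγ, dist_le_of_GG _ _ _ _ (he.trans_le hle)⟩
  have hfin : {γ | InTen γ}.Finite := by
    apply (Set.toFinite ({M1, M2, M3, M4, M5, M6, M7, M8, M9, M10} : Set SL(2, ℤ))).subset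
    intro γ hγ
    simpa [InTen] using hγ
  obtain ⟨γ, hγ, hmin⟩ := Set.exists_min_image {γ | InTen γ} (fun γ => dist z₁ (γ • z₂)) hfin
    ⟨M1, Or.inl rfl⟩
  refine ⟨γ, hγ, le_antisymm (ciInf_le ⟨0, ?_⟩ γ) (le_ciInf fun γ' => ?_)⟩
  · rintro _ ⟨γ', rfl⟩
    exact dist_nonneg
  · obtain ⟨γ'', h'', hle⟩ := hdom γ'
    exact (hmin γ'' h'').trans hle

end
end

section
/- Let F̄ = {z ∈ ℍ² : |Re z| ≤ 1/2 and |z| ≥ 1} be the closure of the standard fundamental domain of SL(2,ℤ), and let Γ₁ = {I, T, L, S} ⊆ SL(2,ℤ) where T = (1 1; 0 1), L = (1 0; 1 1), and S = (0 −1; 1 0). Then for all z₁, z₂ ∈ F̄, inf_{γ ∈ SL(2,ℤ)} d(z₁, γ·z₂) = min_{γ₁, γ₂ ∈ Γ₁} d(γ₁·z₁, γ₂·z₂). -/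
open scoped UpperHalfPlane MatrixGroups

noncomputable section

instance : DecidableEq SL(2, ℤ) :=
  fun a b => decidable_of_iff (a.1 = b.1) (by
    constructor
    · intro h; exact Subtype.ext h
    · intro h; exact congrArg _ h)

/-- `T = (1 1; 0 1)`. -/
def Tmat : SL(2, ℤ) := ⟨!![1, 1; 0, 1], by norm_num [Matrix.det_fin_two_of]⟩

/-- `L = (1 0; 1 1)`. -/
def Lmat : SL(2, ℤ) := ⟨!![1, 0; 1, 1], by norm_num [Matrix.det_fin_two_of]⟩

/-- `S = (0 −1; 1 0)`. -/
def Smat : SL(2, ℤ) := ⟨!![0, -1; 1, 0], by norm_num [Matrix.det_fin_two_of]⟩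

namespace MRG

def GG (x1 y1 x2 y2 a b c d : ℝ) : ℝ := (c*(x1*x2 - y1*y2) + d*x1 - a*x2 - b)^2 + (c*(x1*y2 + x2*y1) + d*y1 - a*y2)^2

lemma GG_neg (x1 y1 x2 y2 a b c d : ℝ) : GG x1 y1 x2 y2 (-a) (-b) (-c) (-d) = GG x1 y1 x2 y2 a b c d := by
  unfold GG; ring

lemma GG_mul (x1 y1 x2 y2 a b c d : ℝ) (h : a*d-b*c = 1) :
  c^2 * (GG x1 y1 x2 y2 a b c d + 2*y1*y2) = ((c*x1-a)*(c*x2+d)+1)^2 + c^2*((c*x1-a)^2*y2^2+(c*x2+d)^2*y1^2) + c^4*y1^2*y2^2 := by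
  have : c*b = a*d-1 := by linarith
  have h2 : c^2 * (GG x1 y1 x2 y2 a b c d + 2*y1*y2) = ((c^2*(x1*x2 - y1*y2) + c*d*x1 - c*a*x2 - c*b)^2 + c^2*(c*(x1*y2 + x2*y1) + d*y1 - a*y2)^2) + 2*c^2*y1*y2 := by
    unfold GG; ring
  rw [h2, this]; ring

/-- the six competitors -/
def Good (x1 y1 x2 y2 Q : ℝ) : Prop :=
  GG x1 y1 x2 y2 1 0 0 1 ≤ Q ∨ GG x1 y1 x2 y2 1 1 0 1 ≤ Q ∨ GG x1 y1 x2 y2 1 (-1) 0 1 ≤ Q ∨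
  GG x1 y1 x2 y2 0 (-1) 1 0 ≤ Q ∨ GG x1 y1 x2 y2 1 0 1 1 ≤ Q ∨ GG x1 y1 x2 y2 1 0 (-1) 1 ≤ Q

lemma GG_I (x1 y1 x2 y2 b : ℝ) : GG x1 y1 x2 y2 1 b 0 1 = (x1-x2-b)^2 + (y1-y2)^2 := by
  unfold GG; ring

lemma GG_one (x1 y1 x2 y2 a d : ℝ) : GG x1 y1 x2 y2 a (a*d-1) 1 d =
    ((x1-a)^2+y1^2)*((x2+d)^2+y2^2) + 1 + 2*(x1-a)*(x2+d) - 2*y1*y2 := by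
  unfold GG; ring

lemma case_zero (x1 y1 x2 y2 : ℝ) (hx1 : |x1| ≤ 1/2) (hx2 : |x2| ≤ 1/2) (b : ℤ) :
    Good x1 y1 x2 y2 (GG x1 y1 x2 y2 1 b 0 1) := by
  rw [abs_le] at hx1 hx2
  unfold Good
  simp only [GG_I]
  rcases lt_trichotomy b 0 with h | h | h
  · have : (b:ℝ) ≤ -1 := by exact_mod_cast (by omega : b ≤ -1)
    right; right; left
    nlinarith
  · subst h; left; simp
  · have : (1:ℝ) ≤ b := by exact_mod_cast (by omega : 1 ≤ b)
    right; left
    nlinarith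

lemma case_two (x1 y1 x2 y2 : ℝ) (hx1 : |x1| ≤ 1/2) (hx2 : |x2| ≤ 1/2) (hy1 : 3/4 ≤ y1^2) (hy2 : 3/4 ≤ y2^2)
    (a b c d : ℝ) (h : a*d-b*c=1) (hc : 2 ≤ c) :
    Good x1 y1 x2 y2 (GG x1 y1 x2 y2 a b c d) := by
  rw [abs_le] at hx1 hx2
  have h1 := GG_mul x1 y1 x2 y2 a b c d h
  have h2 : c^2*(c^2*(y1^2*y2^2)) ≤ c^2 * (GG x1 y1 x2 y2 a b c d + 2*y1*y2) := by
    rw [h1]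
    have : 0 ≤ ((c*x1-a)*(c*x2+d)+1)^2 + c^2*((c*x1-a)^2*y2^2+(c*x2+d)^2*y1^2) := by positivity
    linarith
  have h3 := le_of_mul_le_mul_left h2 (by positivity)
  have h4 : 4*(y1^2*y2^2) ≤ c^2*(y1^2*y2^2) := by
    apply mul_le_mul_of_nonneg_right _ (by positivity)
    nlinarith
  have h5 : 1/4 + y1^2+y2^2 ≤ 4*(y1^2*y2^2) := by nlinarith
  unfold Good
  simp only [GG_I]
  by_cases p : 1/2 ≤ x1 - x2
  · right; left; nlinarith
  by_cases q : x1 - x2 ≤ -1/2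
  · right; right; left; nlinarith
  left; nlinarith

lemma rot1 (x1 n1 x2 n2 d : ℝ) (hx1 : |x1| ≤ 1/2) (hx2 : |x2| ≤ 1/2) (hn1 : 1 ≤ n1) (hn2 : 1 ≤ n2)
   (hd : d = 1 ∨ d = -1) : n1 + n2 - 2*x1*x2 ≤ n1*(n2+2*d*x2+d^2) + 1 + 2*x1*x2+2*d*x1 := by
  rw [abs_le] at hx1 hx2
  rcases hd with rfl | rfl
  · nlinarith [mul_nonneg (sub_nonneg.2 hn1) (sub_nonneg.2 hn2), mul_nonneg (by linarith : 0 ≤ 1+2*x2) (by linarith : 0 ≤ n1+2*x1)]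
  · nlinarith [mul_nonneg (sub_nonneg.2 hn1) (sub_nonneg.2 hn2), mul_nonneg (by linarith : 0 ≤ 1-2*x2) (by linarith : 0 ≤ n1-2*x1)]

lemma far (x1 n1 x2 n2 d : ℝ) (hx1 : |x1| ≤ 1/2) (hx2 : |x2| ≤ 1/2) (hn1 : 1 ≤ n1) 
   (hd : 2 ≤ d ∨ d ≤ -2) : n1 * n2 + 1 + 2*x1*x2 ≤ n1*(n2+2*d*x2+d^2) + 1 + 2*x1*x2+2*d*x1 := by
  rw [abs_le] at hx1 hx2
  rcases hd with h | h
  · have : 0 ≤ n1*(2*x2+d) + 2*x1 := by nlinarith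
    nlinarith
  · have : n1*(2*x2+d) + 2*x1 ≤ 0 := by nlinarith
    nlinarith

lemma int_cases (d : ℤ) : d = 0 ∨ ((d:ℝ) = 1 ∨ (d:ℝ) = -1) ∨ (2 ≤ (d:ℝ) ∨ (d:ℝ) ≤ -2) := by
  have : d = 0 ∨ (d = 1 ∨ d = -1) ∨ (2 ≤ d ∨ d ≤ -2) := by omega
  exact_mod_cast this

lemma mono (P0 P R B : ℝ) (h0 : 1/2 ≤ P0) (h : P = P0 ∨ P0 + 1 ≤ P) (hB : 3/4 ≤ B) :
    P0^2*(R^2+B) - 2*P0*R ≤ P^2*(R^2+B) - 2*P*R := by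
  rcases h with rfl | h
  · rfl
  have : 0 ≤ (P+P0)*(R^2+B) - 2*R := by
    have : 2 *(R^2+B) ≤ (P+P0)*(R^2+B) := by
      apply mul_le_mul_of_nonneg_right (by linarith)
      positivity
    nlinarith [sq_nonneg (R-1/2)]
  nlinarith [mul_nonneg (by linarith : 0 ≤ P - P0) this]

lemma both (x1 A x2 B a d : ℝ) (hx1 : |x1| ≤ 1/2) (hx2 : |x2| ≤ 1/2) (hA : 3/4 ≤ A) (hB : 3/4 ≤ B)
   (ha : a = 1 ∨ 2 ≤ a) (hd : d = 1 ∨ 2 ≤ d) : 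
   ((x1-1)^2+A)*((x2+1)^2+B) + 1 + 2*(x1-1)*(x2+1) ≤ ((x1-a)^2+A)*((x2+d)^2+B) + 1 + 2*(x1-a)*(x2+d) := by
  rw [abs_le] at hx1 hx2
  have e1 := mono (1-x1) (a-x1) (x2+d) B (by linarith) (by rcases ha with h | h; (left; linarith); (right; linarith)) hB
  have e2 := mono (1+x2) (d+x2) (1-x1) A (by linarith) (by rcases hd with h | h; (left; linarith); (right; linarith)) hA
  nlinarith

lemma same (x1 A x2 B X1 X2 : ℝ) (hx1 : |x1| ≤ 1/2) (hx2 : |x2| ≤ 1/2) (hA : 0 ≤ A) (hB : 0 ≤ B)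
   (h : 1/2 ≤ X1 ∧ 1/2 ≤ X2 ∨ X1 ≤ -1/2 ∧ X2 ≤ -1/2) : 
   (x1^2+A)*(x2^2+B) + 1 + 2*x1*x2 ≤ (X1^2+A)*(X2^2+B) + 1 + 2*X1*X2 := by
  rw [abs_le] at hx1 hx2
  have h1 : x1^2 ≤ 1/4 := by nlinarith
  have h2 : x2^2 ≤ 1/4 := by nlinarith
  have h3 : 1/4 ≤ X1^2 := by rcases h with h | h <;> nlinarith
  have h4 : 1/4 ≤ X2^2 := by rcases h with h | h <;> nlinarith
  have h5 : 1/4 ≤ X1 * X2 := by rcases h with h | h <;> nlinarith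
  have h6 : x1*x2 ≤ 1/4 := by nlinarith [sq_nonneg (x1-x2)]
  have : (x1^2+A)*(x2^2+B) ≤ (X1^2+A)*(X2^2+B) := 
    mul_le_mul (by linarith) (by linarith) (by positivity) (by positivity)
  linarith

lemma case_one (x1 y1 x2 y2 : ℝ) (hx1 : |x1| ≤ 1/2) (hx2 : |x2| ≤ 1/2) (hn1 : 1 ≤ x1^2+y1^2) (hn2 : 1 ≤ x2^2+y2^2)
    (hy1 : 3/4 ≤ y1^2) (hy2 : 3/4 ≤ y2^2) (a d : ℤ) :
    Good x1 y1 x2 y2 (GG x1 y1 x2 y2 a (a*d-1) 1 d) := by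
  have eI := GG_I x1 y1 x2 y2 0
  have eS := GG_one x1 y1 x2 y2 0 0
  have eL := GG_one x1 y1 x2 y2 1 1
  have eL' := GG_one x1 y1 x2 y2 (-1) (-1)
  have eN := GG_neg x1 y1 x2 y2 1 0 (-1) 1
  norm_num at eI eS eL eL' eN
  have hS : (x1^2+y1^2)*(x2^2+y2^2) + 1 + 2*x1*x2 - 2*y1*y2 ≤ GG x1 y1 x2 y2 a (a*d-1) 1 d → Good x1 y1 x2 y2 (GG x1 y1 x2 y2 a (a*d-1) 1 d) := by
    intro h; right; right; right; left; linarith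
  have hI : (x1-x2)^2 + (y1-y2)^2 ≤ GG x1 y1 x2 y2 a (a*d-1) 1 d → Good x1 y1 x2 y2 (GG x1 y1 x2 y2 a (a*d-1) 1 d) := by
    intro h; left; linarith
  rw [GG_one] at *
  by_cases ha : a = 0
  · subst ha
    rcases int_cases d with h | h | h
    · subst h; apply hS; norm_num
    · apply hI; have := rot1 x1 _ x2 _ d hx1 hx2 hn1 hn2 h; push_cast; nlinarith
    · apply hS; have := far x1 _ x2 (x2^2+y2^2) d hx1 hx2 hn1 h; push_cast; nlinarith
  by_cases hd : d = 0
  · subst hd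
    rcases int_cases (-a) with h | h | h
    · omega
    · apply hI; have := rot1 x2 _ x1 _ _ hx2 hx1 hn2 hn1 h; push_cast at *; nlinarith
    · apply hS; have := far x2 _ x1 (x1^2+y1^2) _ hx2 hx1 hn2 h; push_cast at *; nlinarith
  have hx1' := abs_le.1 hx1
  have hx2' := abs_le.1 hx2
  rcases lt_or_gt_of_ne ha with ha | ha <;> rcases lt_or_gt_of_ne hd with hd | hd
  · have p : (-a:ℝ) = 1 ∨ (2:ℝ) ≤ -a := by exact_mod_cast (by omega : -a = 1 ∨ 2 ≤ -a)
    have q : (-d:ℝ) = 1 ∨ (2:ℝ) ≤ -d := by exact_mod_cast (by omega : -d = 1 ∨ 2 ≤ -d)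
    have := both (-x1) (y1^2) (-x2) (y2^2) _ _ (by rwa [abs_neg]) (by rwa [abs_neg]) hy1 hy2 p q
    right; right; right; right; right
    nlinarith
  · have p : (a:ℝ) ≤ -1 := by exact_mod_cast (by omega : a ≤ -1)
    have q : (1:ℝ) ≤ d := by exact_mod_cast (by omega : 1 ≤ d)
    apply hS
    have := same x1 (y1^2) x2 (y2^2) (x1-a) (x2+d) hx1 hx2 (by positivity) (by positivity) (Or.inl ⟨by linarith, by linarith⟩)
    linarith
  · have p : (1:ℝ) ≤ a := by exact_mod_cast (by omega : 1 ≤ a)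
    have q : (d:ℝ) ≤ -1 := by exact_mod_cast (by omega : d ≤ -1)
    apply hS
    have := same x1 (y1^2) x2 (y2^2) (x1-a) (x2+d) hx1 hx2 (by positivity) (by positivity) (Or.inr ⟨by linarith, by linarith⟩)
    linarith
  · have p : (a:ℝ) = 1 ∨ (2:ℝ) ≤ a := by exact_mod_cast (by omega : a = 1 ∨ 2 ≤ a)
    have q : (d:ℝ) = 1 ∨ (2:ℝ) ≤ d := by exact_mod_cast (by omega : d = 1 ∨ 2 ≤ d)
    have := both (x1) (y1^2) (x2) (y2^2) _ _ hx1 hx2 hy1 hy2 p q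
    right; right; right; right; left
    rw [eL]; linarith

lemma case_nonneg (x1 y1 x2 y2 : ℝ) (hx1 : |x1| ≤ 1/2) (hx2 : |x2| ≤ 1/2) (hn1 : 1 ≤ x1^2+y1^2) (hn2 : 1 ≤ x2^2+y2^2)
    (a b c d : ℤ) (h : a*d-b*c=1) (hc : 0 ≤ c) :
    Good x1 y1 x2 y2 (GG x1 y1 x2 y2 a b c d) := by
  have hx1' := abs_le.1 hx1
  have hx2' := abs_le.1 hx2
  have hy1 : 3/4 ≤ y1^2 := by nlinarith
  have hy2 : 3/4 ≤ y2^2 := by nlinarith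
  have : c = 0 ∨ c = 1 ∨ 2 ≤ c := by omega
  rcases this with rfl | rfl | hc
  · have had : a * d = 1 := by linarith
    rcases Int.eq_one_or_neg_one_of_mul_eq_one' had with ⟨rfl, rfl⟩ | ⟨rfl, rfl⟩
    · simpa using case_zero x1 y1 x2 y2 hx1 hx2 b
    · have := case_zero x1 y1 x2 y2 hx1 hx2 (-b)
      rw [← GG_neg] at this
      simpa using this
  · have hb : b = a*d-1 := by linarith
    subst hb
    simpa using case_one x1 y1 x2 y2 hx1 hx2 hn1 hn2 hy1 hy2 a d
  · exact case_two x1 y1 x2 y2 hx1 hx2 hy1 hy2 a b c d (by exact_mod_cast h) (by exact_mod_cast hc)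

lemma case_all (x1 y1 x2 y2 : ℝ) (hx1 : |x1| ≤ 1/2) (hx2 : |x2| ≤ 1/2) (hn1 : 1 ≤ x1^2+y1^2) (hn2 : 1 ≤ x2^2+y2^2)
    (a b c d : ℤ) (h : a*d-b*c=1) :
    Good x1 y1 x2 y2 (GG x1 y1 x2 y2 a b c d) := by
  rcases le_total 0 c with hc | hc
  · exact case_nonneg x1 y1 x2 y2 hx1 hx2 hn1 hn2 a b c d h hc
  · have := case_nonneg x1 y1 x2 y2 hx1 hx2 hn1 hn2 (-a) (-b) (-c) (-d) (by linarith) (by omega)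
    push_cast at this
    rwa [GG_neg] at this

lemma cosh_formula (z w : ℍ) (g : SL(2, ℤ)) :
    Real.cosh (dist z (g • w)) = 1 + GG z.re z.im w.re w.im (g 0 0) (g 0 1) (g 1 0) (g 1 1) / (2 * z.im * w.im) := by
  have hne : ((g 1 0 : ℤ) : ℂ) * w + ((g 1 1 : ℤ) : ℂ) ≠ 0 := by
    simpa [UpperHalfPlane.denom] using UpperHalfPlane.denom_ne_zero (g : GL (Fin 2) ℝ) w
  have hN : 0 < Complex.normSq (((g 1 0 : ℤ) : ℂ) * w + ((g 1 1 : ℤ) : ℂ)) := Complex.normSq_pos.2 hne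
  have hw := w.im_pos
  have hz := z.im_pos
  have him : (g • w).im = w.im / Complex.normSq (((g 1 0 : ℤ) : ℂ) * w + ((g 1 1 : ℤ) : ℂ)) :=
    ModularGroup.im_smul_eq_div_normSq g w
  have hco : ((g • w : ℍ) : ℂ) = (((g 0 0 : ℤ) : ℂ) * w + ((g 0 1 : ℤ) : ℂ)) / (((g 1 0 : ℤ) : ℂ) * w + ((g 1 1 : ℤ) : ℂ)) := by
    simpa using UpperHalfPlane.coe_specialLinearGroup_apply g w
  have hsub : (z : ℂ) - ((g • w : ℍ) : ℂ) = ((z:ℂ) * (((g 1 0 : ℤ) : ℂ) * w + ((g 1 1 : ℤ) : ℂ)) - (((g 0 0 : ℤ) : ℂ) * w + ((g 0 1 : ℤ) : ℂ))) / (((g 1 0 : ℤ) : ℂ) * w + ((g 1 1 : ℤ) : ℂ)) := by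
    rw [hco, eq_div_iff hne, sub_mul, div_mul_cancel₀ _ hne]
  have hG : Complex.normSq ((z:ℂ) * (((g 1 0 : ℤ) : ℂ) * w + ((g 1 1 : ℤ) : ℂ)) - (((g 0 0 : ℤ) : ℂ) * w + ((g 0 1 : ℤ) : ℂ))) = GG z.re z.im w.re w.im (g 0 0) (g 0 1) (g 1 0) (g 1 1) := by
    simp only [Complex.normSq_apply, GG, Complex.sub_re, Complex.sub_im, Complex.mul_re, Complex.mul_im, Complex.add_re, Complex.add_im, Complex.intCast_re, Complex.intCast_im, UpperHalfPlane.coe_re, UpperHalfPlane.coe_im]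
    ring
  rw [UpperHalfPlane.cosh_dist, Complex.dist_eq, Complex.sq_norm, hsub, Complex.normSq_div, hG, him]
  field_simp

lemma dist_le (z w : ℍ) (g h : SL(2, ℤ))
    (H : GG z.re z.im w.re w.im (g 0 0) (g 0 1) (g 1 0) (g 1 1) ≤ GG z.re z.im w.re w.im (h 0 0) (h 0 1) (h 1 0) (h 1 1)) :
    dist z (g • w) ≤ dist z (h • w) := by
  have hw := w.im_pos
  have hz := z.im_pos
  rw [← abs_of_nonneg (dist_nonneg (x := z) (y := g • w)), ← abs_of_nonneg (dist_nonneg (x := z) (y := h • w)),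
    ← Real.cosh_le_cosh, cosh_formula, cosh_formula]
  gcongr

lemma dist_move (z w : ℍ) (p q : SL(2, ℤ)) : dist (p • z) (q • w) = dist z ((p⁻¹ * q) • w) := by
  have h : dist (p • z) (p • ((p⁻¹ * q) • w)) = dist z ((p⁻¹ * q) • w) :=
    dist_smul (Matrix.SpecialLinearGroup.map (Int.castRingHom ℝ) p) z ((p⁻¹ * q) • w)
  rw [← h, smul_smul, mul_inv_cancel_left]

lemma exists_pair (z₁ z₂ : ℍ) (h₁ : z₁ ∈ modularFundClosure) (h₂ : z₂ ∈ modularFundClosure) (g : SL(2, ℤ)) :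
    ∃ p ∈ ({1, Tmat, Lmat, Smat} : Finset SL(2, ℤ)), ∃ q ∈ ({1, Tmat, Lmat, Smat} : Finset SL(2, ℤ)),
      dist (p • z₁) (q • z₂) ≤ dist z₁ (g • z₂) := by
  have key (z : ℍ) (h : z ∈ modularFundClosure) : 1 ≤ z.re^2 + z.im^2 := by
    have h' : 1 ≤ ‖(z:ℂ)‖^2 := one_le_pow₀ h.2
    rw [Complex.sq_norm, Complex.normSq_apply] at h'
    simp only [UpperHalfPlane.coe_re, UpperHalfPlane.coe_im] at h'
    linarith
  have hdet : g 0 0 * g 1 1 - g 0 1 * g 1 0 = 1 := by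
    rw [← Matrix.det_fin_two]; exact g.2
  have := case_all z₁.re z₁.im z₂.re z₂.im h₁.1 h₂.1 (key _ h₁) (key _ h₂) _ _ _ _ hdet
  rcases this with H | H | H | H | H | H
  · refine ⟨1, by simp, 1, by simp, ?_⟩
    rw [dist_move]; apply dist_le; simpa using H
  · refine ⟨1, by simp, Tmat, by simp, ?_⟩
    rw [dist_move, inv_one, one_mul]; apply dist_le; simpa [Tmat] using H
  · refine ⟨Tmat, by simp, 1, by simp, ?_⟩
    rw [dist_move, mul_one]; apply dist_le
    rw [Matrix.SpecialLinearGroup.coe_inv, Matrix.adjugate_fin_two]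
    simpa [Tmat] using H
  · refine ⟨1, by simp, Smat, by simp, ?_⟩
    rw [dist_move, inv_one, one_mul]; apply dist_le; simpa [Smat] using H
  · refine ⟨1, by simp, Lmat, by simp, ?_⟩
    rw [dist_move, inv_one, one_mul]; apply dist_le; simpa [Lmat] using H
  · refine ⟨Lmat, by simp, 1, by simp, ?_⟩
    rw [dist_move, mul_one]; apply dist_le
    rw [Matrix.SpecialLinearGroup.coe_inv, Matrix.adjugate_fin_two]
    simpa [Lmat] using H

end MRG

/-- For all `z₁, z₂` in the closure of the standard fundamental domain of `SL(2,ℤ)`,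
`inf_{γ ∈ SL(2,ℤ)} d(z₁, γ·z₂) = min_{γ₁,γ₂ ∈ Γ₁} d(γ₁·z₁, γ₂·z₂)` where
`Γ₁ = {I, T, L, S}`. -/
theorem modular_radical_geodesic_cover (z₁ z₂ : ℍ)
    (h₁ : z₁ ∈ modularFundClosure) (h₂ : z₂ ∈ modularFundClosure) :
    (⨅ γ : SL(2, ℤ), dist z₁ (γ • z₂)) =
      (({1, Tmat, Lmat, Smat} : Finset SL(2, ℤ)) ×ˢ
          ({1, Tmat, Lmat, Smat} : Finset SL(2, ℤ))).inf'
        ((Finset.insert_nonempty _ _).product (Finset.insert_nonempty _ _))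
        (fun p => dist (p.1 • z₁) (p.2 • z₂)) := by
  apply le_antisymm
  · apply Finset.le_inf'
    intro p _
    rw [MRG.dist_move]
    exact ciInf_le ⟨0, by rintro _ ⟨g, rfl⟩; exact dist_nonneg⟩ (p.1⁻¹ * p.2)
  · apply le_ciInf
    intro g
    obtain ⟨p, hp, q, hq, h⟩ := MRG.exists_pair z₁ z₂ h₁ h₂ g
    exact (Finset.inf'_le (fun p : SL(2, ℤ) × SL(2, ℤ) => dist (p.1 • z₁) (p.2 • z₂))
      (Finset.mk_mem_product hp hq)).trans h

end
end
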